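/- arXiv:1506.02924 — 2 statements merged into one kernel-verified Lean document; each statement's English description precedes it below -/
import Mathlib

section
/- Let R be a ring, E a left R-module, and U a pure submodule of E. Then the following are equivalent: (1) for every FP-injective module E containing U purely, E/U is FP-injective; (2) for every injective hull E of U (with U pure in E), E/U is FP-injective. -/
universe u v

/-- `N` is a pure submodule of `M`: every finite system of linear equations with
constant terms in `N` which is solvable in `M` is solvable in `N`
(equivalently, `- ⊗ N → - ⊗ M` stays injective). -/
def IsPureSubmodule (R : Type u) [Ring R] {M : Type v} [AddCommGroup M] [Module R M]
    (N : Submodule R M) : Prop :=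
  ∀ (k l : ℕ) (a : Fin k → Fin l → R) (e : Fin k → N),
    (∃ x : Fin l → M, ∀ i, ∑ j, a i j • x j = (e i : M)) →
    ∃ y : Fin l → N, ∀ i, ∑ j, a i j • (y j : M) = (e i : M)

/-- `N` is an RD-pure (relatively divisible) submodule of `M`: `rM ∩ N = rN` for all `r`. -/
def IsRDPureSubmodule (R : Type u) [Ring R] {M : Type v} [AddCommGroup M] [Module R M]
    (N : Submodule R M) : Prop :=
  ∀ (r : R) (n : M), n ∈ N → (∃ m : M, r • m = n) → ∃ n' ∈ N, r • n' = n

/-- `N` is an essential submodule of `M`. -/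
def IsEssentialSubmodule (R : Type u) [Ring R] {M : Type v} [AddCommGroup M] [Module R M]
    (N : Submodule R M) : Prop :=
  ∀ K : Submodule R M, K ⊓ N = ⊥ → K = ⊥

/-- `M` is a pure-essential extension of its submodule `N`. -/
def IsPureEssential (R : Type u) [Ring R] {M : Type v} [AddCommGroup M] [Module R M]
    (N : Submodule R M) : Prop :=
  IsPureSubmodule R N ∧ ∀ K : Submodule R M, K ≠ ⊥ → K ⊓ N = ⊥ →
    ¬ IsPureSubmodule R (N.map K.mkQ)

/-- `M` is an RD-essential extension of its submodule `N`. -/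
def IsRDEssential (R : Type u) [Ring R] {M : Type v} [AddCommGroup M] [Module R M]
    (N : Submodule R M) : Prop :=
  IsRDPureSubmodule R N ∧ ∀ K : Submodule R M, K ≠ ⊥ → K ⊓ N = ⊥ →
    ¬ IsRDPureSubmodule R (N.map K.mkQ)

/-- `M` is pure-injective: injective relative to pure monomorphisms. -/
def IsPureInjective (R : Type u) [Ring R] (M : Type v) [AddCommGroup M] [Module R M] : Prop :=
  ∀ (A B : Type v) [AddCommGroup A] [Module R A] [AddCommGroup B] [Module R B]
    (f : A →ₗ[R] B), Function.Injective f → IsPureSubmodule R (LinearMap.range f) →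
    ∀ g : A →ₗ[R] M, ∃ h : B →ₗ[R] M, h ∘ₗ f = g

/-- `M` is RD-injective: injective relative to RD-pure monomorphisms. -/
def IsRDInjective (R : Type u) [Ring R] (M : Type v) [AddCommGroup M] [Module R M] : Prop :=
  ∀ (A B : Type v) [AddCommGroup A] [Module R A] [AddCommGroup B] [Module R B]
    (f : A →ₗ[R] B), Function.Injective f → IsRDPureSubmodule R (LinearMap.range f) →
    ∀ g : A →ₗ[R] M, ∃ h : B →ₗ[R] M, h ∘ₗ f = g

/-- `Ext¹_R(F, M) = 0`, phrased as: every short exact sequence `0 → M → X → F → 0` splits. -/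
def Ext1Vanishes (R : Type u) [Ring R] (F : Type v) [AddCommGroup F] [Module R F]
    (M : Type v) [AddCommGroup M] [Module R M] : Prop :=
  ∀ (X : Type v) [AddCommGroup X] [Module R X] (i : M →ₗ[R] X) (p : X →ₗ[R] F),
    Function.Injective i → Function.Surjective p → LinearMap.ker p = LinearMap.range i →
    ∃ s : X →ₗ[R] M, s ∘ₗ i = LinearMap.id

/-- `M` is FP-injective: `Ext¹(F, M) = 0` for every finitely presented `F`. -/
def IsFPInjective (R : Type u) [Ring R] (M : Type v) [AddCommGroup M] [Module R M] : Prop :=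
  ∀ (F : Type v) [AddCommGroup F] [Module R F], Module.FinitePresentation R F →
    Ext1Vanishes R F M

/-- `M` is P-flat: `Tor₁(R/rR, M) = 0` for every `r`, i.e. `rm = 0` implies
`m ∈ (right annihilator of r) • M`. -/
def IsPFlat (R : Type u) [Ring R] (M : Type v) [AddCommGroup M] [Module R M] : Prop :=
  ∀ (r : R) (m : M), r • m = 0 →
    m ∈ Submodule.span R {x : M | ∃ s : R, ∃ y : M, r * s = 0 ∧ x = s • y}

/-- `M` is a flat left module (equational criterion of flatness, valid over any ring). -/
def IsFlatMod (R : Type u) [Ring R] (M : Type v) [AddCommGroup M] [Module R M] : Prop :=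
  ∀ (k : ℕ) (a : Fin k → R) (x : Fin k → M), (∑ i, a i • x i) = 0 →
    ∃ (l : ℕ) (b : Fin k → Fin l → R) (y : Fin l → M),
      (∀ i, x i = ∑ j, b i j • y j) ∧ ∀ j, (∑ i, a i * b i j) = 0

/-- `M` is semi-compact: every finitely solvable system of congruences
`x ≡ x_α (mod M[I_α])` has a simultaneous solution. -/
def IsSemiCompact (R : Type u) [Ring R] (M : Type v) [AddCommGroup M] [Module R M] : Prop :=
  ∀ (ι : Type v) (x : ι → M) (I : ι → Ideal R),
    (∀ s : Finset ι, ∃ m : M, ∀ i ∈ s, ∀ a ∈ I i, a • (m - x i) = 0) →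
    ∃ m : M, ∀ i, ∀ a ∈ I i, a • (m - x i) = 0

/-- Extension property for maps from finitely generated submodules of finite free modules. -/
def FPExtProp (R : Type u) [Ring R] (M : Type u) [AddCommGroup M] [Module R M] : Prop :=
  ∀ (n : ℕ) (K : Submodule R (Fin n → R)), K.FG → ∀ f : K →ₗ[R] M,
    ∃ g : (Fin n → R) →ₗ[R] M, ∀ x : K, g x = f x

theorem fpExtProp_of_isFPInjective {R : Type u} [Ring R] {M : Type u} [AddCommGroup M]
    [Module R M] (h : IsFPInjective R M) : FPExtProp R M := by
  intro n K hK f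
  -- the pushout of `M ← K → R^n`
  let S : Submodule R (M × (Fin n → R)) := LinearMap.range (f.prod (-K.subtype))
  have hS : ∀ z, z ∈ S ↔ ∃ k : K, f k = z.1 ∧ -(k : Fin n → R) = z.2 := by
    intro z
    simp only [S, LinearMap.mem_range, Prod.ext_iff]
    rfl
  have hF : Module.FinitePresentation R ((Fin n → R) ⧸ K) :=
    Module.finitePresentation_of_surjective K.mkQ K.mkQ_surjective (by simpa using hK)
  let i : M →ₗ[R] (M × (Fin n → R)) ⧸ S := S.mkQ ∘ₗ LinearMap.inl R M (Fin n → R)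
  have hle : S ≤ LinearMap.ker (K.mkQ ∘ₗ LinearMap.snd R M (Fin n → R)) := by
    intro z hz
    obtain ⟨k, -, hk⟩ := (hS z).1 hz
    simp [← hk]
  let p : ((M × (Fin n → R)) ⧸ S) →ₗ[R] (Fin n → R) ⧸ K := S.liftQ _ hle
  have h1 : Function.Injective i := by
    refine (injective_iff_map_eq_zero i).2 fun m hm => ?_
    obtain ⟨k, h1, h2⟩ := (hS _).1 ((Submodule.Quotient.mk_eq_zero S).1 hm)
    have : k = 0 := by
      apply Subtype.ext
      simpa using h2
    simpa [this] using h1.symm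
  have h2 : Function.Surjective p := by
    intro y
    obtain ⟨y, rfl⟩ := K.mkQ_surjective y
    exact ⟨S.mkQ (0, y), by simp [p]⟩
  have h3 : LinearMap.ker p = LinearMap.range i := by
    ext y
    obtain ⟨⟨m, v⟩, rfl⟩ := S.mkQ_surjective y
    constructor
    · intro hy
      have hv : v ∈ K := by simpa [p] using hy
      refine ⟨m + f ⟨v, hv⟩, (Submodule.Quotient.eq S).2 ((hS _).2 ⟨⟨v, hv⟩, ?_, ?_⟩)⟩ <;> simp
    · rintro ⟨m', hm'⟩
      rw [← hm']
      simp [p, i]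
  obtain ⟨s, hs⟩ := h _ hF _ i p h1 h2 h3
  refine ⟨s ∘ₗ S.mkQ ∘ₗ LinearMap.inr R M (Fin n → R), fun x => ?_⟩
  have h1 : S.mkQ (LinearMap.inr R M (Fin n → R) x) = i (f x) := by
    refine (Submodule.Quotient.eq S).2 ((hS _).2 ⟨-x, ?_, ?_⟩) <;> simp
  have h2 := LinearMap.congr_fun hs (f x)
  simp only [LinearMap.comp_apply, LinearMap.id_apply] at h2 ⊢
  rw [h1, h2]

theorem isFPInjective_of_fpExtProp {R : Type u} [Ring R] {M : Type u} [AddCommGroup M]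
    [Module R M] (h : FPExtProp R M) : IsFPInjective R M := by
  intro F _ _ hF X _ _ i p hi hp hker
  obtain ⟨n, m, q, g, hq, -⟩ := Module.FinitePresentation.exists_fin' R F
  have hK : (LinearMap.ker q).FG := Module.FinitePresentation.fg_ker q hq
  obtain ⟨l, hl⟩ := Module.projective_lifting_property p q hp
  have hl' : ∀ v, p (l v) = q v := fun v => LinearMap.congr_fun hl v
  let e := LinearEquiv.ofInjective i hi
  have he : ∀ y, i (e.symm y) = y := fun y =>
    congrArg Subtype.val (e.apply_symm_apply y)
  let lk : LinearMap.ker q →ₗ[R] LinearMap.range i :=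
    (l ∘ₗ (LinearMap.ker q).subtype).codRestrict _ (fun v => by
      rw [← hker, LinearMap.mem_ker]
      simp [hl'])
  obtain ⟨t, ht⟩ := h n _ hK (e.symm.toLinearMap ∘ₗ lk)
  -- the map `l - i t : R^n → X` factors through `F`
  have hle : LinearMap.ker q ≤ LinearMap.ker (l - i ∘ₗ t) := by
    intro v hv
    have := ht ⟨v, hv⟩
    simp only [LinearMap.mem_ker, LinearMap.sub_apply, LinearMap.comp_apply]
    simp only [LinearMap.comp_apply, LinearEquiv.coe_coe] at this
    rw [this, he]
    simp [lk]
  let c : F →ₗ[R] X := (LinearMap.ker q).liftQ _ hle ∘ₗ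
    (q.quotKerEquivOfSurjective hq).symm.toLinearMap
  have hc : ∀ v, c (q v) = l v - i (t v) := by
    intro v
    have : (q.quotKerEquivOfSurjective hq).symm (q v) = (LinearMap.ker q).mkQ v := by
      rw [LinearEquiv.symm_apply_eq]; rfl
    simp only [c, LinearMap.comp_apply, LinearEquiv.coe_coe, this]
    simp
  have hpi : ∀ m, p (i m) = 0 := fun m => by
    have : i m ∈ LinearMap.ker p := hker ▸ ⟨m, rfl⟩
    exact this
  have hpc : ∀ y, p (c y) = y := by
    intro y
    obtain ⟨v, rfl⟩ := hq y
    rw [hc, map_sub, hpi, hl', sub_zero]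
  let r : X →ₗ[R] LinearMap.range i := (LinearMap.id - c ∘ₗ p).codRestrict _ (fun x => by
      rw [← hker, LinearMap.mem_ker]
      simp [hpc])
  refine ⟨e.symm.toLinearMap ∘ₗ r, ?_⟩
  ext m
  apply hi
  simp only [LinearMap.comp_apply, LinearEquiv.coe_coe, he]
  simp [r, hpi]

theorem FPExtProp.of_pure {R : Type u} [Ring R] {U E : Type u} [AddCommGroup U] [Module R U]
    [AddCommGroup E] [Module R E] (i : U →ₗ[R] E) (hi : Function.Injective i)
    (hpure : IsPureSubmodule R (LinearMap.range i)) (h : FPExtProp R E) : FPExtProp R U := by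
  intro n K hK f
  obtain ⟨g, hg⟩ := h n K hK (i ∘ₗ f)
  obtain ⟨m, a, ha⟩ := Submodule.fg_iff_exists_fin_generating_family.1 hK
  have haK : ∀ k, a k ∈ K := fun k => ha ▸ Submodule.subset_span ⟨k, rfl⟩
  have expand : ∀ {N : Type u} [AddCommGroup N] [Module R N] (φ : (Fin n → R) →ₗ[R] N)
      (v : Fin n → R), φ v = ∑ j, v j • φ (Pi.single j 1) := by
    intro N _ _ φ v
    conv_lhs => rw [pi_eq_sum_univ' v]
    simp [map_sum]
  obtain ⟨y, hy⟩ := hpure m n a (fun k => ⟨i (f ⟨a k, haK k⟩), ⟨_, rfl⟩⟩)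
    ⟨fun j => g (Pi.single j 1), fun k => by
      rw [← expand g]; exact hg ⟨a k, haK k⟩⟩
  choose w hw using fun j => (y j).2
  let G : (Fin n → R) →ₗ[R] U := Fintype.linearCombination R w
  have hG : ∀ v, i (G v) = ∑ j, v j • (y j : E) := by
    intro v
    simp [G, Fintype.linearCombination_apply, hw]
  refine ⟨G, ?_⟩
  have key : ∀ x (hx : x ∈ K), G x = f ⟨x, hx⟩ := by
    intro x hx
    have hx' : x ∈ Submodule.span R (Set.range a) := ha ▸ hx
    have : x ∈ Submodule.map K.subtype (LinearMap.eqLocus (G ∘ₗ K.subtype) f) := by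
      refine Submodule.span_le.2 ?_ hx'
      rintro _ ⟨k, rfl⟩
      refine ⟨⟨a k, haK k⟩, ?_, rfl⟩
      apply hi
      exact (hG _).trans (hy k)
    obtain ⟨x', hx1, rfl⟩ := this
    exact hx1
  exact fun x => key x x.2

theorem FPExtProp.isPure {R : Type u} [Ring R] {U H : Type u} [AddCommGroup U] [Module R U]
    [AddCommGroup H] [Module R H] (j : U →ₗ[R] H) (hj : Function.Injective j)
    (h : FPExtProp R U) : IsPureSubmodule R (LinearMap.range j) := by
  rintro k l a e ⟨x, hx⟩
  let K : Submodule R (Fin l → R) := Submodule.span R (Set.range a)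
  have hK : K.FG := Submodule.fg_span (Set.finite_range a)
  let φ : (Fin l → R) →ₗ[R] H := Fintype.linearCombination R x
  have hφ : ∀ i, φ (a i) = e i := fun i => by
    rw [← hx]; simp [φ, Fintype.linearCombination_apply]
  have hle : K ≤ (LinearMap.range j).comap φ := by
    refine Submodule.span_le.2 ?_
    rintro _ ⟨i, rfl⟩
    change φ (a i) ∈ LinearMap.range j
    rw [hφ]; exact (e i).2
  let E := LinearEquiv.ofInjective j hj
  have hE : ∀ y, j (E.symm y) = y := fun y => congrArg Subtype.val (E.apply_symm_apply y)
  obtain ⟨g, hg⟩ := h l K hK (E.symm.toLinearMap ∘ₗ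
    (φ ∘ₗ K.subtype).codRestrict (LinearMap.range j) (fun v => hle v.2))
  refine ⟨fun t => ⟨j (g (Pi.single t 1)), ⟨_, rfl⟩⟩, fun i => ?_⟩
  have h1 := congrArg j (hg ⟨a i, Submodule.subset_span ⟨i, rfl⟩⟩)
  simp only [LinearMap.comp_apply, LinearEquiv.coe_coe, hE] at h1
  have h2 : j (g (a i)) = e i := h1.trans (hφ i)
  rw [← h2]
  conv_rhs => rw [pi_eq_sum_univ' (a i)]
  simp [map_sum]

theorem fpExtProp_of_injective {R : Type u} [Ring R] {M : Type u} [AddCommGroup M]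
    [Module R M] (h : Module.Injective R M) : FPExtProp R M := by
  intro n K _ f
  exact h.out K.subtype K.injective_subtype f

theorem exists_injective_embedding (R : Type u) [Ring R] (U : Type u) [AddCommGroup U]
    [Module R U] : ∃ (I : Type u) (_ : AddCommGroup I) (_ : Module R I) (i : U →ₗ[R] I),
      Function.Injective i ∧ Module.Injective R I := by
  obtain ⟨J⟩ := (inferInstance : CategoryTheory.EnoughInjectives (ModuleCat.{u} R)).presentation
    (ModuleCat.of R U)
  refine ⟨J.J, inferInstance, inferInstance, J.f.hom, ?_, ?_⟩
  · exact (ModuleCat.mono_iff_injective J.f).1 J.mono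
  · have := J.injective
    exact Module.injective_module_of_injective_object R J.J

/-- A maximal submodule among those meeting `H` trivially. -/
theorem exists_maximal_disjoint {R : Type u} [Ring R] {I : Type u} [AddCommGroup I]
    [Module R I] (H : Submodule R I) :
    ∃ C, Maximal (· ∈ {C : Submodule R I | ∀ x ∈ C, x ∈ H → x = 0}) C := by
  suffices hch : ∀ c ⊆ {C : Submodule R I | ∀ x ∈ C, x ∈ H → x = 0}, IsChain (· ≤ ·) c →
      ∀ y ∈ c, ∃ ub ∈ {C : Submodule R I | ∀ x ∈ C, x ∈ H → x = 0}, ∀ z ∈ c, z ≤ ub by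
    obtain ⟨C, -, hC⟩ := zorn_le_nonempty₀ _ hch ⊥ (by intro x hx _; simpa using hx)
    exact ⟨C, hC⟩
  · intro c hc hch y hy
    refine ⟨sSup c, ?_, fun z hz => le_sSup hz⟩
    intro x hx hxH
    obtain ⟨D, hD, hxD⟩ := (Submodule.mem_sSup_of_directed ⟨y, hy⟩ hch.directedOn).1 hx
    exact hc hD x hxD hxH

theorem exists_hull (R : Type u) [Ring R] (U : Type u) [AddCommGroup U]
    [Module R U] : ∃ (H : Type u) (_ : AddCommGroup H) (_ : Module R H) (j : U →ₗ[R] H),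
      Function.Injective j ∧ Module.Injective R H ∧
      IsEssentialSubmodule R (LinearMap.range j) := by
  obtain ⟨I, _, _, i, hi, hI⟩ := exists_injective_embedding R U
  let N := LinearMap.range i
  obtain ⟨H, hNH, hH⟩ := zorn_le_nonempty₀
    {H : Submodule R I | ∀ x ∈ H, x ≠ 0 → ∃ r : R, r • x ∈ N ∧ r • x ≠ 0} (by
      intro c hc hch y hy
      refine ⟨sSup c, ?_, fun z hz => le_sSup hz⟩
      intro x hx hx0
      obtain ⟨D, hD, hxD⟩ := (Submodule.mem_sSup_of_directed ⟨y, hy⟩ hch.directedOn).1 hx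
      exact hc hD x hxD hx0) N (fun x hx hx0 => ⟨1, by simpa using hx, by simpa using hx0⟩)
  obtain ⟨C, hC⟩ := exists_maximal_disjoint H
  obtain ⟨φ, hφ⟩ := hI.out (C.mkQ ∘ₗ H.subtype) (by
    refine (injective_iff_map_eq_zero _).2 fun x hx => ?_
    have : (x : I) ∈ C := by simpa using hx
    exact Subtype.ext (hC.1 x this x.2)) H.subtype
  have hφ' : ∀ x ∈ H, φ (C.mkQ x) = x := fun x hx => hφ ⟨x, hx⟩
  have hess : ∀ z ∈ LinearMap.range φ, z ≠ 0 → ∃ r : R, r • z ∈ H ∧ r • z ≠ 0 := by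
    rintro _ ⟨y, rfl⟩ hz
    obtain ⟨x, rfl⟩ := C.mkQ_surjective y
    have hx : x ∉ C := fun hx => hz (by
      rw [show C.mkQ x = 0 by simpa using hx, map_zero])
    have hnot : ¬ ∀ h ∈ C ⊔ Submodule.span R {x}, h ∈ H → h = 0 := by
      intro hall
      have := hC.2 (y := C ⊔ Submodule.span R {x}) hall le_sup_left
      exact hx (this (Submodule.mem_sup_right (Submodule.mem_span_singleton_self x)))
    push Not at hnot
    obtain ⟨h, hmem, hhH, hh0⟩ := hnot
    obtain ⟨c, hc, w, hw, rfl⟩ := Submodule.mem_sup.1 hmem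
    obtain ⟨r, rfl⟩ := Submodule.mem_span_singleton.1 hw
    have e1 : r • φ (C.mkQ x) = c + r • x := by
      rw [← hφ' _ hhH, map_add, map_smul, show C.mkQ c = 0 by simpa using hc, zero_add, map_smul]
    exact ⟨r, by rw [e1]; exact hhH, by rw [e1]; exact hh0⟩
  have hHφ : H ≤ LinearMap.range φ := fun x hx => ⟨_, hφ' x hx⟩
  have hφH : LinearMap.range φ ≤ H := by
    refine hH.2 ?_ hHφ
    intro z hz hz0
    obtain ⟨r, hr, hr0⟩ := hess z hz hz0
    obtain ⟨s, hs, hs0⟩ := hH.1 _ hr hr0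
    exact ⟨s * r, by rwa [mul_smul], by rwa [mul_smul]⟩
  let ρ : I →ₗ[R] H := (φ ∘ₗ C.mkQ).codRestrict H (fun x => hφH ⟨_, rfl⟩)
  have hρ : ∀ x : H, ρ x = x := fun x => Subtype.ext (hφ' x x.2)
  refine ⟨H, inferInstance, inferInstance, i.codRestrict H (fun u => hNH ⟨u, rfl⟩), ?_, ⟨?_⟩, ?_⟩
  · intro a b hab
    exact hi (congrArg Subtype.val hab)
  · intro X Y _ _ _ _ f hf g
    obtain ⟨t, ht⟩ := hI.out f hf (H.subtype ∘ₗ g)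
    refine ⟨ρ ∘ₗ t, fun x => ?_⟩
    rw [LinearMap.comp_apply, ht]
    exact hρ (g x)
  · intro K hK
    rw [Submodule.eq_bot_iff]
    intro x hx
    by_contra hx0
    obtain ⟨r, ⟨u, hu⟩, hr0⟩ := hH.1 x x.2 (fun h => hx0 (Subtype.ext h))
    have : r • x ∈ K ⊓ LinearMap.range (i.codRestrict H (fun u => hNH ⟨u, rfl⟩)) :=
      ⟨K.smul_mem r hx, ⟨u, Subtype.ext hu⟩⟩
    rw [hK, Submodule.mem_bot] at this
    exact hr0 (congrArg Subtype.val this)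

theorem FPExtProp.quotient {R : Type u} [Ring R] {U E H : Type u} [AddCommGroup U] [Module R U]
    [AddCommGroup E] [Module R E] [AddCommGroup H] [Module R H]
    (i : U →ₗ[R] E) (hi : Function.Injective i) (j : U →ₗ[R] H) (hj : Function.Injective j)
    (hE : FPExtProp R E) (hH : Module.Injective R H)
    (hQ : FPExtProp R (H ⧸ LinearMap.range j)) : FPExtProp R (E ⧸ LinearMap.range i) := by
  obtain ⟨g, hg⟩ := hH.out i hi j
  intro n K hK f
  let gbar : (E ⧸ LinearMap.range i) →ₗ[R] (H ⧸ LinearMap.range j) :=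
    Submodule.mapQ _ _ g (by
      rintro _ ⟨u, rfl⟩
      exact ⟨u, (hg u).symm⟩)
  obtain ⟨φ, hφ⟩ := hQ n K hK (gbar ∘ₗ f)
  obtain ⟨ψ, hψ⟩ := Module.projective_lifting_property (LinearMap.range j).mkQ φ
    (Submodule.mkQ_surjective _)
  -- `E` embeds in `H × E/U` as the pullback over `H/U`
  let ι : E →ₗ[R] H × (E ⧸ LinearMap.range i) := g.prod (LinearMap.range i).mkQ
  have hι : Function.Injective ι := by
    refine (injective_iff_map_eq_zero _).2 fun e he => ?_
    have h1 : g e = 0 := congrArg Prod.fst he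
    have h2 : (LinearMap.range i).mkQ e = 0 := congrArg Prod.snd he
    obtain ⟨u, rfl⟩ : e ∈ LinearMap.range i := by simpa using h2
    rw [hg] at h1
    rw [(injective_iff_map_eq_zero j).1 hj u h1, map_zero]
  have hmem : ∀ k : K, (((ψ ∘ₗ K.subtype).prod f) k) ∈ LinearMap.range ι := by
    intro k
    obtain ⟨e, he⟩ := (LinearMap.range i).mkQ_surjective (f k)
    have h1 : (LinearMap.range j).mkQ (ψ k) = (LinearMap.range j).mkQ (g e) := by
      have h2 : (LinearMap.range j).mkQ (ψ k) = φ k := LinearMap.congr_fun hψ k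
      rw [h2, hφ, LinearMap.comp_apply, ← he]
      rfl
    obtain ⟨u, hu⟩ := (Submodule.Quotient.eq _).1 h1
    refine ⟨e + i u, Prod.ext ?_ ?_⟩
    · change g (e + i u) = ψ k
      rw [map_add, hg, hu]; abel
    · change (LinearMap.range i).mkQ (e + i u) = f k
      rw [map_add, he]; simp
  let e := LinearEquiv.ofInjective ι hι
  have he : ∀ y, ι (e.symm y) = y := fun y => congrArg Subtype.val (e.apply_symm_apply y)
  obtain ⟨t, ht⟩ := hE n K hK (e.symm.toLinearMap ∘ₗ
    ((ψ ∘ₗ K.subtype).prod f).codRestrict (LinearMap.range ι) hmem)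
  refine ⟨(LinearMap.range i).mkQ ∘ₗ t, fun x => ?_⟩
  have h1 := congrArg ι (ht x)
  simp only [LinearMap.comp_apply, LinearEquiv.coe_coe, he] at h1
  exact congrArg Prod.snd h1

/-- For a module `U` over a ring `R`, the following are equivalent:
(1) for every FP-injective module `E` containing `U` as a pure submodule, `E/U` is
FP-injective; (2) for every injective hull `E` of `U` with `U` pure in `E`, `E/U`
is FP-injective. -/
theorem fp_injective_quotient_tfae (R : Type u) [Ring R]
    (U : Type u) [AddCommGroup U] [Module R U] :
    (∀ (E : Type u) [AddCommGroup E] [Module R E] (i : U →ₗ[R] E),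
      Function.Injective i → IsPureSubmodule R (LinearMap.range i) →
      IsFPInjective R E → IsFPInjective R (E ⧸ LinearMap.range i)) ↔
    (∀ (E : Type u) [AddCommGroup E] [Module R E] (i : U →ₗ[R] E),
      Function.Injective i → IsPureSubmodule R (LinearMap.range i) →
      Module.Injective R E → IsEssentialSubmodule R (LinearMap.range i) →
      IsFPInjective R (E ⧸ LinearMap.range i)) := by
  constructor
  · intro h E _ _ i hi hp hE _
    exact h E i hi hp (isFPInjective_of_fpExtProp (fpExtProp_of_injective hE))
  · intro h E _ _ i hi hp hE
    have hE' := fpExtProp_of_isFPInjective hE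
    have hU : FPExtProp R U := FPExtProp.of_pure i hi hp hE'
    obtain ⟨H, _, _, j, hj, hH, hess⟩ := exists_hull R U
    have hQ := h H j hj (hU.isPure j hj) hH hess
    exact isFPInjective_of_fpExtProp
      (FPExtProp.quotient i hi j hj hE' hH (fpExtProp_of_isFPInjective hQ))
end

section
/- Let R be a ring admitting a family 𝔈 of orthogonal central idempotents such that R/R(1-e) is left pure-semisimple for each e ∈ 𝔈, and R/A is von Neumann regular where A = ⊕_{e∈𝔈} Re. Then every left R-module M with Ext¹_R(R/B, M) = 0 for every pure left ideal B of R is pure-injective. -/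
universe u v

/-- The submodule `eX` of `X` for a central element `e`. -/
def eSub (R : Type u) [Ring R] (e : R) (he : e ∈ Set.center R)
    (X : Type v) [AddCommGroup X] [Module R X] : Submodule R X where
  carrier := {x | e • x = x}
  add_mem' := by
    intro a b ha hb
    simp only [Set.mem_ofPred_eq] at *
    rw [smul_add, ha, hb]
  zero_mem' := by simp
  smul_mem' := by
    intro c x hx
    simp only [Set.mem_ofPred_eq] at *
    rw [smul_smul, ((Set.mem_center_iff.1 he).comm c).eq, mul_smul, hx]

/-- `eX` is a module over `R/R(1-e)`. -/
noncomputable def eSubHom (R : Type u) [Ring R] (e : R) (he : e ∈ Set.center R)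
    (X : Type v) [AddCommGroup X] [Module R X] :
    (TwoSidedIdeal.span {1 - e} : TwoSidedIdeal R).ringCon.Quotient →+*
      AddMonoid.End (eSub R e he X) :=
  RingCon.lift _ (Module.toAddMonoidEnd R (eSub R e he X)) (by
    refine RingCon.ringConGen_le.2 ?_
    intro a b hab
    have hab' : a - b = 1 - e := hab
    change Module.toAddMonoidEnd R (eSub R e he X) a = Module.toAddMonoidEnd R (eSub R e he X) b
    ext x
    have hx : e • (x : X) = x := x.2
    have : (a - b) • (x : X) = 0 := by
      rw [hab', sub_smul, hx, one_smul, sub_self]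
    rw [sub_smul, sub_eq_zero] at this
    exact this)

/-- The module structure. -/
noncomputable abbrev eSubModule (R : Type u) [Ring R] (e : R) (he : e ∈ Set.center R)
    (X : Type v) [AddCommGroup X] [Module R X] :
    Module (TwoSidedIdeal.span {1 - e} : TwoSidedIdeal R).ringCon.Quotient (eSub R e he X) :=
  Module.compHom _ (eSubHom R e he X)

theorem exists_component (R : Type u) [Ring R] (e : R) (he : e ∈ Set.center R)
    (hid : IsIdempotentElem e)
    (hpss : ∀ (M : Type u) [AddCommGroup M]
      [Module (TwoSidedIdeal.span {1 - e} : TwoSidedIdeal R).ringCon.Quotient M],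
      IsPureInjective (TwoSidedIdeal.span {1 - e} : TwoSidedIdeal R).ringCon.Quotient M)
    (M A B : Type u) [AddCommGroup M] [Module R M] [AddCommGroup A] [Module R A]
    [AddCommGroup B] [Module R B] (f : A →ₗ[R] B) (hf : Function.Injective f)
    (hp : IsPureSubmodule R (LinearMap.range f)) (g : A →ₗ[R] M) :
    ∃ h : B →ₗ[R] M, (∀ a, h (f a) = e • g a) ∧ ∀ b, e • h b = h b := by
  have hc : ∀ r : R, e * r = r * e := fun r => ((Set.mem_center_iff.1 he).comm r).eq
  letI := eSubModule R e he M
  letI := eSubModule R e he A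
  letI := eSubModule R e he B
  have hmem : ∀ (X : Type u) [AddCommGroup X] [Module R X] (x : X), e • x ∈ eSub R e he X := by
    intro X _ _ x
    change e • e • x = e • x
    rw [smul_smul, hid.eq]
  -- restriction of linear maps
  have hres : ∀ (X Y : Type u) [AddCommGroup X] [Module R X] [AddCommGroup Y] [Module R Y]
      (φ : X →ₗ[R] Y) (x : eSub R e he X), φ x ∈ eSub R e he Y := by
    intro X Y _ _ _ _ φ x
    change e • φ x = φ x
    rw [← map_smul]; congr 1; exact x.2
  let Q := (TwoSidedIdeal.span {1 - e} : TwoSidedIdeal R).ringCon.Quotient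
  let q : R → Q := fun r => (r : Q)
  have hq : Function.Surjective q := fun x => Quotient.inductionOn' x fun r => ⟨r, rfl⟩
  have hA : ∀ (r : R) (x : eSub R e he A), q r • x = r • x := fun _ _ => rfl
  have hB : ∀ (r : R) (x : eSub R e he B), q r • x = r • x := fun _ _ => rfl
  have hM : ∀ (r : R) (x : eSub R e he M), q r • x = r • x := fun _ _ => rfl
  let fe : eSub R e he A →ₗ[Q] eSub R e he B :=
    { toFun := fun x => ⟨f x, hres A B f x⟩
      map_add' := fun x y => by ext; simp
      map_smul' := fun c x => by
        obtain ⟨r, rfl⟩ := hq c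
        ext
        simp [hA, hB] }
  let ge : eSub R e he A →ₗ[Q] eSub R e he M :=
    { toFun := fun x => ⟨g x, hres A M g x⟩
      map_add' := fun x y => by ext; simp
      map_smul' := fun c x => by
        obtain ⟨r, rfl⟩ := hq c
        ext
        simp [hA, hM] }
  obtain ⟨h, hh⟩ := hpss (eSub R e he M) (eSub R e he A) (eSub R e he B) fe
    (by
      intro x y hxy
      have : f x = f y := congrArg Subtype.val hxy
      exact Subtype.ext (hf this))
    (by
      intro k l a b hx
      obtain ⟨x, hx⟩ := hx
      choose a' ha' using fun i j => hq (a i j)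
      have hb : ∀ i, ((b i : eSub R e he B) : B) ∈ LinearMap.range f := by
        intro i
        obtain ⟨z, hz⟩ := (b i).2
        exact ⟨z, congrArg Subtype.val hz⟩
      obtain ⟨y, hy⟩ := hp k l a' (fun i => ⟨_, hb i⟩) ⟨fun j => x j, by
        intro i
        have := congrArg Subtype.val (hx i)
        simpa [← ha', hB] using this⟩
      choose z hz using fun j => (y j).2
      refine ⟨fun j => ⟨fe ⟨e • z j, hmem A _⟩, ⟨_, rfl⟩⟩, ?_⟩
      intro i
      have h1 := congrArg (fun t => e • t) (hy i)
      have h2 : e • ((b i : eSub R e he B) : B) = (b i : eSub R e he B) := (b i : eSub R e he B).2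
      simp only [h2] at h1
      apply Subtype.ext
      rw [← h1, Finset.smul_sum]
      simp only [← ha', hB, AddSubmonoidClass.coe_finsetSum, Submodule.coe_smul]
      refine Finset.sum_congr rfl fun j _ => ?_
      change a' i j • f (e • z j) = _
      rw [map_smul, hz, smul_smul, smul_smul, hc]) ge
  refine ⟨{ toFun := fun b => h ⟨e • b, hmem B b⟩
            map_add' := ?_
            map_smul' := ?_ }, ?_, ?_⟩
  · intro x y
    rw [← Submodule.coe_add, ← map_add]
    congr 2
    ext; simp
  · intro r x
    have : (⟨e • r • x, hmem B _⟩ : eSub R e he B) = q r • ⟨e • x, hmem B x⟩ := by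
      rw [hB]; ext; simp [smul_smul, hc]
    rw [this, map_smul, hM]; rfl
  · intro a
    have h1 : (⟨e • f a, hmem B _⟩ : eSub R e he B) = fe ⟨e • a, hmem A a⟩ := by
      ext; simp [fe]
    change ((h ⟨e • f a, hmem B _⟩ : eSub R e he M) : M) = _
    rw [h1]
    have h2 := LinearMap.congr_fun hh ⟨e • a, hmem A a⟩
    have h3 : ((h (fe ⟨e • a, hmem A a⟩) : eSub R e he M) : M) = g (e • a) :=
      congrArg Subtype.val h2
    rw [h3, map_smul]
  · intro b
    exact (h ⟨e • b, hmem B b⟩).2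

theorem extend_of_ext {R : Type u} [Ring R] {M : Type u} [AddCommGroup M] [Module R M]
    (B : Ideal R) (h : Ext1Vanishes R (R ⧸ B) M) (φ : B →ₗ[R] M) :
    ∃ m : M, ∀ b : B, φ b = (b : R) • m := by
  let N : Submodule R (M × R) := LinearMap.range (φ.prod (-B.subtype))
  let i : M →ₗ[R] (M × R) ⧸ N := N.mkQ ∘ₗ LinearMap.inl R M R
  let p : ((M × R) ⧸ N) →ₗ[R] R ⧸ B := N.liftQ (B.mkQ ∘ₗ LinearMap.snd R M R) (by
    rintro _ ⟨b, rfl⟩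
    simp)
  obtain ⟨s, hs⟩ := h _ i p
    (by
      rw [← LinearMap.ker_eq_bot, LinearMap.ker_eq_bot']
      intro m hm
      have : ((m, 0) : M × R) ∈ N := (Submodule.Quotient.mk_eq_zero N).1 hm
      obtain ⟨b, hb⟩ := this
      have h1 : φ b = m := congrArg Prod.fst hb
      have h2 : -(b : R) = 0 := congrArg Prod.snd hb
      have h3 : b = 0 := Subtype.ext (by simpa using h2)
      rw [← h1, h3, map_zero])
    (by
      intro y
      obtain ⟨r, rfl⟩ := B.mkQ_surjective y
      exact ⟨N.mkQ (0, r), rfl⟩)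
    (by
      ext y
      obtain ⟨⟨m, r⟩, rfl⟩ := N.mkQ_surjective y
      constructor
      · intro hy
        have hr : r ∈ B := (Submodule.Quotient.mk_eq_zero B).1 hy
        refine ⟨m + φ ⟨r, hr⟩, ?_⟩
        refine (Submodule.Quotient.eq N).2 ⟨⟨r, hr⟩, ?_⟩
        simp
      · rintro ⟨m', hm'⟩
        rw [← hm']
        change B.mkQ 0 = 0
        simp)
  refine ⟨s (N.mkQ (0, 1)), fun b => ?_⟩
  have h1 : s (i (φ b)) = φ b := LinearMap.congr_fun hs (φ b)
  rw [← h1, ← map_smul, ← map_smul]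
  congr 1
  refine (Submodule.Quotient.eq N).2 ⟨b, ?_⟩
  simp

theorem main_aux (R : Type u) [Ring R] (Es : Set R)
    (hcent : ∀ e ∈ Es, e ∈ Set.center R)
    (hidem : ∀ e ∈ Es, IsIdempotentElem e)
    (horth : ∀ e ∈ Es, ∀ f ∈ Es, e ≠ f → e * f = 0)
    (hpss : ∀ e ∈ Es, ∀ (M : Type u) [AddCommGroup M]
      [Module (TwoSidedIdeal.span {1 - e} : TwoSidedIdeal R).ringCon.Quotient M],
      IsPureInjective (TwoSidedIdeal.span {1 - e} : TwoSidedIdeal R).ringCon.Quotient M)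
    (hvnr : ∀ a : R, ∃ x : R, a - a * x * a ∈ Ideal.span Es)
    (M : Type u) [AddCommGroup M] [Module R M]
    (hM : ∀ B : Ideal R, IsFlatMod R (R ⧸ B) → Ext1Vanishes R (R ⧸ B) M) :
    IsPureInjective R M := by
  classical
  have hc : ∀ e ∈ Es, ∀ r : R, e * r = r * e :=
    fun e he r => ((Set.mem_center_iff.1 (hcent e he)).comm r).eq
  -- finite support
  have hfin : ∀ a ∈ Ideal.span Es, {e : Es | a * (e : R) ≠ 0}.Finite := by
    intro a ha
    refine Submodule.span_induction (p := fun a _ => {e : Es | a * (e : R) ≠ 0}.Finite)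
      ?_ ?_ ?_ ?_ ha
    · intro f hf
      refine (Set.finite_singleton (⟨f, hf⟩ : Es)).subset ?_
      intro e he
      by_contra hne
      exact he (horth f hf e e.2 fun h => hne (Subtype.ext h.symm))
    · simp
    · intro x y _ _ hx hy
      refine (hx.union hy).subset ?_
      intro e he
      by_contra hne
      simp only [Set.mem_union, Set.mem_ofPred_eq, not_or, not_not] at hne
      exact he (by rw [add_mul, hne.1, hne.2, add_zero])
    · intro r x _ hx
      refine hx.subset ?_
      intro e he hx0
      exact he (by rw [smul_eq_mul, mul_assoc, hx0, mul_zero])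
  -- local units
  have hunit : ∀ a ∈ Ideal.span Es, ∃ f ∈ Ideal.span Es, a * f = a ∧ ∀ r, f * r = r * f := by
    intro a ha
    have key : ∃ s : Finset Es, ∀ t : Finset Es, s ⊆ t → a * ∑ e ∈ t, (e : R) = a := by
      refine Submodule.span_induction
        (p := fun a _ => ∃ s : Finset Es, ∀ t : Finset Es, s ⊆ t → a * ∑ e ∈ t, (e : R) = a)
        ?_ ?_ ?_ ?_ ha
      · intro f hf
        refine ⟨{⟨f, hf⟩}, fun t ht => ?_⟩
        rw [Finset.mul_sum, Finset.sum_eq_single (⟨f, hf⟩ : Es)]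
        · exact (hidem f hf).eq
        · intro e _ hne
          exact horth f hf e e.2 fun h => hne (Subtype.ext h.symm)
        · intro h; exact absurd (ht (by simp)) h
      · exact ⟨∅, by simp⟩
      · rintro x y _ _ ⟨s, hs⟩ ⟨t, ht⟩
        refine ⟨s ∪ t, fun w hw => ?_⟩
        rw [add_mul, hs w (Finset.union_subset_left hw), ht w (Finset.union_subset_right hw)]
      · rintro r x _ ⟨s, hs⟩
        refine ⟨s, fun t ht => ?_⟩
        rw [smul_eq_mul, mul_assoc, hs t ht]
    obtain ⟨s, hs⟩ := key
    refine ⟨∑ e ∈ s, (e : R), Submodule.sum_mem _ fun e _ => Ideal.subset_span e.2,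
      hs s (Finset.Subset.refl _), fun r => ?_⟩
    rw [Finset.sum_mul, Finset.mul_sum]
    exact Finset.sum_congr rfl fun e _ => hc e e.2 r
  -- ideals containing `A` are pure
  have hflat : ∀ B : Ideal R, Ideal.span Es ≤ B → IsFlatMod R (R ⧸ B) := by
    intro B hB k a x hx
    choose r hr using fun i => B.mkQ_surjective (x i)
    have hb : ∑ i, a i * r i ∈ B := by
      rw [← Submodule.Quotient.mk_eq_zero B, ← hx, ← Submodule.mkQ_apply, map_sum]
      refine Finset.sum_congr rfl fun i _ => ?_
      rw [← hr i, ← map_smul, smul_eq_mul]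
    obtain ⟨y, hy⟩ := hvnr (∑ i, a i * r i)
    obtain ⟨f, hf, hfy, -⟩ := hunit _ hy
    generalize hbdef : ∑ i, a i * r i = b at *
    have hcB : y * b + f - y * b * f ∈ B :=
      B.sub_mem (B.add_mem (B.mul_mem_left _ hb) (hB hf)) (B.mul_mem_left _ (hB hf))
    have hbc : b * (y * b + f - y * b * f) = b := by
      have : b * (y * b + f - y * b * f) = b * y * b + (b - b * y * b) * f := by noncomm_ring
      rw [this, hfy]; abel
    generalize y * b + f - y * b * f = c at *
    refine ⟨1, fun i _ => r i * (1 - c), fun _ => B.mkQ 1, ?_, ?_⟩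
    · intro i
      rw [← hr i]
      simp only [Finset.univ_unique, Finset.sum_const, Finset.card_singleton, one_smul]
      rw [← map_smul]
      refine (Submodule.Quotient.eq B).2 ?_
      have : r i - (r i * (1 - c)) • (1 : R) = r i * c := by
        rw [smul_eq_mul]; noncomm_ring
      rw [this]
      exact B.mul_mem_left _ hcB
    · intro _
      simp only [← mul_assoc]
      rw [← Finset.sum_mul, hbdef, mul_sub, mul_one, hbc, sub_self]
  have hext : ∀ B : Ideal R, Ideal.span Es ≤ B → ∀ φ : B →ₗ[R] M,
      ∃ m : M, ∀ b : B, φ b = (b : R) • m :=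
    fun B hB φ => extend_of_ext B (hM B (hflat B hB)) φ
  -- surjectivity of `M → ∏ eM`
  have hsurj : ∀ p : Es → M, (∀ e : Es, (e : R) • p e = p e) → ∃ m : M, ∀ e : Es, (e : R) • m = p e := by
    intro p hp
    have hsupp : ∀ a : Ideal.span Es, (Function.support fun e : Es => (a : R) • p e).Finite := by
      intro a
      refine (hfin a a.2).subset ?_
      intro e he h0
      apply he
      change (a : R) • p e = 0
      rw [← hp e, smul_smul, h0, zero_smul]
    obtain ⟨m, hm⟩ := hext (Ideal.span Es) le_rfl
      { toFun := fun a => ∑ᶠ e : Es, (a : R) • p e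
        map_add' := by
          intro a b
          rw [← finsum_add_distrib (hsupp a) (hsupp b)]
          simp [add_smul]
        map_smul' := by
          intro r a
          simp only [RingHom.id_apply]
          rw [smul_finsum' r (hsupp a)]
          simp [mul_smul] }
    refine ⟨m, fun e => ?_⟩
    rw [← hm ⟨e, Ideal.subset_span e.2⟩]
    change ∑ᶠ e' : Es, (e : R) • p e' = p e
    rw [finsum_eq_single _ e, hp e]
    intro e' hne
    rw [← hp e', smul_smul, horth e e.2 e' e'.2 fun h => hne (Subtype.ext h.symm), zero_smul]
  -- the kernel
  let K : Submodule R M :=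
    { carrier := {m | ∀ e ∈ Es, e • m = 0}
      add_mem' := by
        intro a b ha hb e he
        rw [smul_add, ha e he, hb e he, add_zero]
      zero_mem' := by intro e _; simp
      smul_mem' := by
        intro r m hm e he
        rw [smul_smul, hc e he, mul_smul, hm e he, smul_zero] }
  have hAK : ∀ a ∈ Ideal.span Es, ∀ m ∈ K, a • m = 0 := by
    intro a ha m hm
    refine Submodule.span_induction (p := fun a _ => a • m = 0) ?_ ?_ ?_ ?_ ha
    · intro e he; exact hm e he
    · simp
    · intro x y _ _ hx hy; rw [add_smul, hx, hy, add_zero]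
    · intro r x _ hx; rw [smul_assoc, hx, smul_zero]
  have hbaer : Module.Baer R K := by
    intro I φ
    have hcomp : ∀ (x : (⟨I, φ⟩ : R →ₗ.[R] K).domain)
        (y : (⟨Ideal.span Es, 0⟩ : R →ₗ.[R] K).domain), (x : R) = y →
        (⟨I, φ⟩ : R →ₗ.[R] K) x = (⟨Ideal.span Es, 0⟩ : R →ₗ.[R] K) y := by
      rintro ⟨x, hx⟩ ⟨y, hy⟩ hxy
      change x = y at hxy
      subst hxy
      change φ ⟨x, hx⟩ = 0
      obtain ⟨f, hf, hfx, hfc⟩ := hunit x hy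
      have : (⟨x, hx⟩ : I) = f • ⟨x, hx⟩ := by
        ext; change x = f * x; rw [hfc, hfx]
      rw [this, map_smul]
      ext
      exact hAK f hf _ (φ ⟨x, hx⟩).2
    let Φ := LinearPMap.sup _ _ hcomp
    obtain ⟨m, hm⟩ := hext (I ⊔ Ideal.span Es) le_sup_right (K.subtype ∘ₗ Φ.toFun)
    have hmK : m ∈ K := by
      intro e he
      have heA : e ∈ Ideal.span Es := Ideal.subset_span he
      rw [← hm ⟨e, Submodule.mem_sup_right heA⟩]
      have : Φ ⟨e, Submodule.mem_sup_right heA⟩ = 0 :=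
        ((LinearPMap.right_le_sup _ _ hcomp).2 (x := ⟨e, heA⟩) rfl).symm
      exact congrArg Subtype.val this
    refine ⟨LinearMap.toSpanSingleton R K ⟨m, hmK⟩, ?_⟩
    intro x hx
    ext
    have h1 := hm ⟨x, Submodule.mem_sup_left hx⟩
    have h2 : φ ⟨x, hx⟩ = Φ ⟨x, Submodule.mem_sup_left hx⟩ :=
      (LinearPMap.left_le_sup _ _ hcomp).2 (x := ⟨x, hx⟩) rfl
    rw [h2]
    exact h1.symm
  -- conclusion
  obtain ⟨ρ, hρ⟩ := hbaer.extension_property K.subtype K.injective_subtype LinearMap.id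
  have hρ' : ∀ k : K, ρ k = k := fun k => LinearMap.congr_fun hρ k
  intro A B _ _ _ _ f hf hp g
  obtain ⟨hK, hhK⟩ := hbaer.extension_property f hf (ρ ∘ₗ g)
  choose h hh1 hh2 using fun e : Es => exists_component R e (hcent e e.2) (hidem e e.2)
    (hpss e e.2) M A B f hf hp g
  have huniq : ∀ m m' : M, ρ m = ρ m' → (∀ e : Es, (e : R) • m = (e : R) • m') → m = m' := by
    intro m m' h1 h2
    have hmem : m - m' ∈ K := by
      intro e he
      rw [smul_sub, h2 ⟨e, he⟩, sub_self]
    have h3 := hρ' ⟨m - m', hmem⟩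
    rw [map_sub, h1, sub_self] at h3
    exact sub_eq_zero.1 (congrArg Subtype.val h3).symm
  have hex : ∀ b : B, ∃ m : M, ρ m = hK b ∧ ∀ e : Es, (e : R) • m = h e b := by
    intro b
    obtain ⟨m, hm⟩ := hsurj (fun e => h e b) (fun e => hh2 e b)
    refine ⟨m + (hK b - ρ m : K), ?_, fun e => ?_⟩
    · rw [map_add, hρ']; abel
    · rw [smul_add, hm e, (hK b - ρ m : K).2 e e.2, add_zero]
  choose H hH1 hH2 using hex
  refine ⟨{ toFun := H, map_add' := ?_, map_smul' := ?_ }, ?_⟩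
  · intro x y
    apply huniq
    · simp [hH1]
    · intro e; simp [hH2, smul_add]
  · intro r x
    apply huniq
    · simp [hH1]
    · intro e
      simp only [RingHom.id_apply]
      rw [smul_smul, hc e e.2, mul_smul, hH2, hH2, map_smul]
  · ext a
    apply huniq
    · change ρ (H (f a)) = _
      rw [hH1]
      exact LinearMap.congr_fun hhK a
    · intro e
      change (e : R) • H (f a) = _
      rw [hH2, hh1]

/-- Suppose `R` has a family `𝔈` of orthogonal central idempotents such that
`R/R(1-e)` is left pure-semisimple for each `e ∈ 𝔈` and `R/A` is von Neumann regular where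
`A = ⊕_{e ∈ 𝔈} Re`. Then every left `R`-module `M` with `Ext¹(R/B, M) = 0` for every pure
left ideal `B` is pure-injective. -/
theorem pure_injective_of_baer_for_pure_ideals (R : Type u) [Ring R] (Es : Set R)
    (hcent : ∀ e ∈ Es, e ∈ Set.center R)
    (hidem : ∀ e ∈ Es, IsIdempotentElem e)
    (horth : ∀ e ∈ Es, ∀ f ∈ Es, e ≠ f → e * f = 0)
    (hpss : ∀ e ∈ Es, ∀ (M : Type u) [AddCommGroup M]
      [Module (TwoSidedIdeal.span {1 - e} : TwoSidedIdeal R).ringCon.Quotient M],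
      IsPureInjective (TwoSidedIdeal.span {1 - e} : TwoSidedIdeal R).ringCon.Quotient M)
    (hvnr : ∀ a : R, ∃ x : R, a - a * x * a ∈ Ideal.span Es)
    (M : Type u) [AddCommGroup M] [Module R M]
    (hM : ∀ B : Ideal R, IsFlatMod R (R ⧸ B) → Ext1Vanishes R (R ⧸ B) M) :
    IsPureInjective R M := by
  exact main_aux R Es hcent hidem horth hpss hvnr M hM
end
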